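/- Let Λ := R, Γ ⊢ Δ be a labelled sequent for first-order intuitionistic logics. If R, w ≤ u, Γ ⊢ Δ is derivable in G3IntQ (respectively, in G3IntQC) and there is a (possibly empty) propagation path π(w,u) in the propagation graph of Λ with s_π(w,u) ∈ L_{S4}(a), then R, Γ ⊢ Δ is derivable in G3IntQ (respectively, in G3IntQC). -/

import Mathlib

/-!
Labelled sequent calculi for first-order intuitionistic logics.
-/

namespace IntFOL

/-- Terms: parameters and (de Bruijn) bound variables. -/
inductive ITerm : Type
  | param : ℕ → ITerm
  | bvar : ℕ → ITerm

/-- First-order formulae built from atomic formulae and `⊥` by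
`∧`, `∨`, `⊃`, `∃`, `∀` (quantifiers in de Bruijn style). -/
inductive IFml : Type
  | atom : ℕ → List ITerm → IFml
  | bot : IFml
  | and : IFml → IFml → IFml
  | or : IFml → IFml → IFml
  | imp : IFml → IFml → IFml
  | all : IFml → IFml
  | ex : IFml → IFml

/-- Instantiate the bound variable of index `d` by the parameter `a` in a term. -/
def instT (a d : ℕ) : ITerm → ITerm
  | ITerm.param b => ITerm.param b
  | ITerm.bvar m => if m = d then ITerm.param a else ITerm.bvar m

/-- Instantiate the bound variable of index `d` by the parameter `a`. -/
def instF (a : ℕ) : ℕ → IFml → IFml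
  | d, IFml.atom P ts => IFml.atom P (ts.map (instT a d))
  | _, IFml.bot => IFml.bot
  | d, IFml.and φ ψ => IFml.and (instF a d φ) (instF a d ψ)
  | d, IFml.or φ ψ => IFml.or (instF a d φ) (instF a d ψ)
  | d, IFml.imp φ ψ => IFml.imp (instF a d φ) (instF a d ψ)
  | d, IFml.all φ => IFml.all (instF a (d + 1) φ)
  | d, IFml.ex φ => IFml.ex (instF a (d + 1) φ)

/-- `open0 φ a` is the substitution `φ(a/x)` of the parameter `a` for the
variable bound by the outermost (removed) quantifier. -/
def open0 (φ : IFml) (a : ℕ) : IFml := instF a 0 φ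

/-- The parameter `a` occurs in a term. -/
def pT (a : ℕ) : ITerm → Prop
  | ITerm.param b => b = a
  | ITerm.bvar _ => False

/-- The parameter `a` occurs in a formula. -/
def pF (a : ℕ) : IFml → Prop
  | IFml.atom _ ts => ∃ t ∈ ts, pT a t
  | IFml.bot => False
  | IFml.and φ ψ => pF a φ ∨ pF a ψ
  | IFml.or φ ψ => pF a φ ∨ pF a ψ
  | IFml.imp φ ψ => pF a φ ∨ pF a ψ
  | IFml.all φ => pF a φ
  | IFml.ex φ => pF a φ

/-- All bound-variable indices of a term are below `k`. -/
def lcT (k : ℕ) : ITerm → Prop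
  | ITerm.param _ => True
  | ITerm.bvar m => m < k

/-- All free bound-variable indices of a formula are below `k`;
`lcF 0 φ` says that `φ` has no free (bound) variables. -/
def lcF : ℕ → IFml → Prop
  | k, IFml.atom _ ts => ∀ t ∈ ts, lcT k t
  | _, IFml.bot => True
  | k, IFml.and φ ψ => lcF k φ ∧ lcF k ψ
  | k, IFml.or φ ψ => lcF k φ ∧ lcF k ψ
  | k, IFml.imp φ ψ => lcF k φ ∧ lcF k ψ
  | k, IFml.all φ => lcF (k + 1) φ
  | k, IFml.ex φ => lcF (k + 1) φ

/-- Multisets of labelled formulae `w : φ`. -/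
abbrev LSeq : Type := Multiset (ℕ × IFml)

/-- Edges of the propagation graph determined by the relational atoms `w ≤ u`:
`true` encodes the character `a` (a forward move) and `false` its converse `ā`. -/
def IEdge (Rle : Multiset (ℕ × ℕ)) (w u : ℕ) (c : Bool) : Prop :=
  if c then (w, u) ∈ Rle else (u, w) ∈ Rle

/-- Propagation paths in the propagation graph, with their strings. -/
inductive BPath (Rle : Multiset (ℕ × ℕ)) : ℕ → ℕ → List Bool → Prop
  | nil (w : ℕ) : BPath Rle w w []
  | cons {w u v : ℕ} {c : Bool} {s : List Bool} :
      IEdge Rle w u c → BPath Rle u v s → BPath Rle w v (c :: s)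

/-- One-step rewriting for string rewriting systems over the alphabet `{a, ā}`. -/
def OneStepB (P : Set (Bool × List Bool)) (s t : List Bool) : Prop :=
  ∃ u v x r, (x, r) ∈ P ∧ s = u ++ x :: v ∧ t = u ++ r ++ v

/-- `LangB P x s` iff `x →*_P s`. -/
def LangB (P : Set (Bool × List Bool)) (x : Bool) (s : List Bool) : Prop :=
  Relation.ReflTransGen (OneStepB P) [x] s

/-- The system `S4 := {a → ε, a → a·a, ā → ε, ā → ā·ā}`
(`true` is `a`, `false` is `ā`). -/
def S4sys : Set (Bool × List Bool) :=
  {(true, []), (true, [true, true]), (false, []), (false, [false, false])}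

/-- The system `S5 := {a → ε, a → ā·a, ā → ε, ā → a·ā}`. -/
def S5sys : Set (Bool × List Bool) :=
  {(true, []), (true, [false, true]), (false, []), (false, [true, false])}

/-- There is a propagation path `π(w,u)` with `s_π(w,u) ∈ L_{S4}(a)`. -/
def Cond4 (Rle : Multiset (ℕ × ℕ)) (w u : ℕ) : Prop :=
  ∃ s, BPath Rle w u s ∧ LangB S4sys true s

/-- There is a propagation path `π(w,u)` with `s_π(w,u) ∈ L_{S5}(a)`. -/
def Cond5 (Rle : Multiset (ℕ × ℕ)) (w u : ℕ) : Prop :=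
  ∃ s, BPath Rle w u s ∧ LangB S5sys true s

/-- `Cond4` for the non-constant domain case (`cd = false`), `Cond5` for the
constant domain case (`cd = true`). -/
def CondD (cd : Bool) (Rle : Multiset (ℕ × ℕ)) (w u : ℕ) : Prop :=
  if cd then Cond5 Rle w u else Cond4 Rle w u

/-- The label `v` occurs in the labelled sequent `R, Γ ⊢ Δ` (where the
antecedent `R` consists of the relational atoms `Rle` and domain atoms `Dom`,
a domain atom `a ∈ D_w` being encoded as the pair `(a, w)`). -/
def loccurs (v : ℕ) (Rle Dom : Multiset (ℕ × ℕ)) (Γ Δ : LSeq) : Prop :=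
  (∃ w u, (w, u) ∈ Rle ∧ (v = w ∨ v = u)) ∨ (∃ a, (a, v) ∈ Dom) ∨
    (∃ φ, (v, φ) ∈ Γ) ∨ ∃ φ, (v, φ) ∈ Δ

/-- The parameter `a` occurs in the labelled sequent. -/
def poccurs (a : ℕ) (Dom : Multiset (ℕ × ℕ)) (Γ Δ : LSeq) : Prop :=
  (∃ w, (a, w) ∈ Dom) ∨ (∃ w φ, (w, φ) ∈ Γ ∧ pF a φ) ∨ ∃ w φ, (w, φ) ∈ Δ ∧ pF a φ

/-- Gated labelled sequent calculi for first-order intuitionistic logics.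
Sequents are `Rle, Dom, Γ ⊢ Δ`.  The rules `(⊥l)`, `(∧l)`, `(∧r)`, `(∨l)`,
`(∨r)`, `(⊃r)`, `(∃l)`, `(∀r)` are always present; the rules `(id)`, `(⊃l)`,
`(∃r)`, `(∀l)` of `G3IntQ` are present exactly when `gOld` holds; the structural
rules `(ref)`, `(tra)`, `(nd)`, `(ned)` — and, when `cd = true`, `(cd)` — are
present exactly when `gStr` holds; and the rules `(id^X)`, `(Pr_⊃)`, `(∃r1^X)`,
`(∃r2^X)`, `(∀l1^X)`, `(∀l2^X)` of `R(Q)` (for `cd = false`) or `R(QC)` (for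
`cd = true`) are present exactly when `gNew` holds.  In particular
`IDer false True True False` is `G3IntQ`, `IDer true True True False` is
`G3IntQC`, `IDer false False False True` is `IntQL*` and
`IDer true False False True` is `IntQCL*`. -/
inductive IDer (cd : Bool) (gOld gStr gNew : Prop) :
    Multiset (ℕ × ℕ) → Multiset (ℕ × ℕ) → LSeq → LSeq → Prop
  | botl (Rle Dom : Multiset (ℕ × ℕ)) (Γ Δ : LSeq) (w : ℕ) :
      IDer cd gOld gStr gNew Rle Dom ((w, IFml.bot) ::ₘ Γ) Δ
  | andl {Rle Dom : Multiset (ℕ × ℕ)} {Γ Δ : LSeq} {w : ℕ} {φ ψ : IFml} :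
      IDer cd gOld gStr gNew Rle Dom ((w, φ) ::ₘ (w, ψ) ::ₘ Γ) Δ →
      IDer cd gOld gStr gNew Rle Dom ((w, IFml.and φ ψ) ::ₘ Γ) Δ
  | andr {Rle Dom : Multiset (ℕ × ℕ)} {Γ Δ : LSeq} {w : ℕ} {φ ψ : IFml} :
      IDer cd gOld gStr gNew Rle Dom Γ ((w, φ) ::ₘ Δ) →
      IDer cd gOld gStr gNew Rle Dom Γ ((w, ψ) ::ₘ Δ) →
      IDer cd gOld gStr gNew Rle Dom Γ ((w, IFml.and φ ψ) ::ₘ Δ)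
  | orl {Rle Dom : Multiset (ℕ × ℕ)} {Γ Δ : LSeq} {w : ℕ} {φ ψ : IFml} :
      IDer cd gOld gStr gNew Rle Dom ((w, φ) ::ₘ Γ) Δ →
      IDer cd gOld gStr gNew Rle Dom ((w, ψ) ::ₘ Γ) Δ →
      IDer cd gOld gStr gNew Rle Dom ((w, IFml.or φ ψ) ::ₘ Γ) Δ
  | orr {Rle Dom : Multiset (ℕ × ℕ)} {Γ Δ : LSeq} {w : ℕ} {φ ψ : IFml} :
      IDer cd gOld gStr gNew Rle Dom Γ ((w, φ) ::ₘ (w, ψ) ::ₘ Δ) →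
      IDer cd gOld gStr gNew Rle Dom Γ ((w, IFml.or φ ψ) ::ₘ Δ)
  | impr {Rle Dom : Multiset (ℕ × ℕ)} {Γ Δ : LSeq} {w u : ℕ} {φ ψ : IFml} :
      ¬ loccurs u Rle Dom Γ ((w, IFml.imp φ ψ) ::ₘ Δ) →
      IDer cd gOld gStr gNew ((w, u) ::ₘ Rle) Dom ((u, φ) ::ₘ Γ) ((u, ψ) ::ₘ Δ) →
      IDer cd gOld gStr gNew Rle Dom Γ ((w, IFml.imp φ ψ) ::ₘ Δ)
  | exl {Rle Dom : Multiset (ℕ × ℕ)} {Γ Δ : LSeq} {w a : ℕ} {φ : IFml} :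
      ¬ poccurs a Dom ((w, IFml.ex φ) ::ₘ Γ) Δ →
      IDer cd gOld gStr gNew Rle ((a, w) ::ₘ Dom) ((w, open0 φ a) ::ₘ Γ) Δ →
      IDer cd gOld gStr gNew Rle Dom ((w, IFml.ex φ) ::ₘ Γ) Δ
  | allr {Rle Dom : Multiset (ℕ × ℕ)} {Γ Δ : LSeq} {w u a : ℕ} {φ : IFml} :
      ¬ loccurs u Rle Dom Γ ((w, IFml.all φ) ::ₘ Δ) →
      ¬ poccurs a Dom Γ ((w, IFml.all φ) ::ₘ Δ) →
      IDer cd gOld gStr gNew ((w, u) ::ₘ Rle) ((a, u) ::ₘ Dom) Γ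
        ((u, open0 φ a) ::ₘ Δ) →
      IDer cd gOld gStr gNew Rle Dom Γ ((w, IFml.all φ) ::ₘ Δ)
  | id (h : gOld) {Rle Dom : Multiset (ℕ × ℕ)} {Γ Δ : LSeq} (w u P : ℕ)
      (as : List ℕ) :
      IDer cd gOld gStr gNew ((w, u) ::ₘ Rle)
        ((↑(as.map fun a => (a, w)) : Multiset (ℕ × ℕ)) + Dom)
        ((w, IFml.atom P (as.map ITerm.param)) ::ₘ Γ)
        ((u, IFml.atom P (as.map ITerm.param)) ::ₘ Δ)
  | impl (h : gOld) {Rle Dom : Multiset (ℕ × ℕ)} {Γ Δ : LSeq} {w u : ℕ}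
      {φ ψ : IFml} :
      IDer cd gOld gStr gNew ((w, u) ::ₘ Rle) Dom ((w, IFml.imp φ ψ) ::ₘ Γ)
        ((u, φ) ::ₘ Δ) →
      IDer cd gOld gStr gNew ((w, u) ::ₘ Rle) Dom
        ((w, IFml.imp φ ψ) ::ₘ (u, ψ) ::ₘ Γ) Δ →
      IDer cd gOld gStr gNew ((w, u) ::ₘ Rle) Dom ((w, IFml.imp φ ψ) ::ₘ Γ) Δ
  | exr (h : gOld) {Rle Dom : Multiset (ℕ × ℕ)} {Γ Δ : LSeq} {w a : ℕ}
      {φ : IFml} :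
      IDer cd gOld gStr gNew Rle ((a, w) ::ₘ Dom) Γ
        ((w, open0 φ a) ::ₘ (w, IFml.ex φ) ::ₘ Δ) →
      IDer cd gOld gStr gNew Rle ((a, w) ::ₘ Dom) Γ ((w, IFml.ex φ) ::ₘ Δ)
  | alll (h : gOld) {Rle Dom : Multiset (ℕ × ℕ)} {Γ Δ : LSeq} {w u a : ℕ}
      {φ : IFml} :
      IDer cd gOld gStr gNew ((w, u) ::ₘ Rle) ((a, u) ::ₘ Dom)
        ((u, open0 φ a) ::ₘ (w, IFml.all φ) ::ₘ Γ) Δ →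
      IDer cd gOld gStr gNew ((w, u) ::ₘ Rle) ((a, u) ::ₘ Dom)
        ((w, IFml.all φ) ::ₘ Γ) Δ
  | ref (h : gStr) {Rle Dom : Multiset (ℕ × ℕ)} {Γ Δ : LSeq} {w : ℕ} :
      IDer cd gOld gStr gNew ((w, w) ::ₘ Rle) Dom Γ Δ →
      IDer cd gOld gStr gNew Rle Dom Γ Δ
  | tra (h : gStr) {Rle Dom : Multiset (ℕ × ℕ)} {Γ Δ : LSeq} {w u v : ℕ} :
      IDer cd gOld gStr gNew ((w, u) ::ₘ (u, v) ::ₘ (w, v) ::ₘ Rle) Dom Γ Δ →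
      IDer cd gOld gStr gNew ((w, u) ::ₘ (u, v) ::ₘ Rle) Dom Γ Δ
  | nd (h : gStr) {Rle Dom : Multiset (ℕ × ℕ)} {Γ Δ : LSeq} {v w a : ℕ} :
      IDer cd gOld gStr gNew ((v, w) ::ₘ Rle) ((a, v) ::ₘ (a, w) ::ₘ Dom) Γ Δ →
      IDer cd gOld gStr gNew ((v, w) ::ₘ Rle) ((a, v) ::ₘ Dom) Γ Δ
  | ned (h : gStr) {Rle Dom : Multiset (ℕ × ℕ)} {Γ Δ : LSeq} {a w : ℕ} :
      ¬ poccurs a Dom Γ Δ →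
      IDer cd gOld gStr gNew Rle ((a, w) ::ₘ Dom) Γ Δ →
      IDer cd gOld gStr gNew Rle Dom Γ Δ
  | cdr (h : gStr) (hcd : cd = true) {Rle Dom : Multiset (ℕ × ℕ)} {Γ Δ : LSeq}
      {v w a : ℕ} :
      IDer cd gOld gStr gNew ((v, w) ::ₘ Rle) ((a, w) ::ₘ (a, v) ::ₘ Dom) Γ Δ →
      IDer cd gOld gStr gNew ((v, w) ::ₘ Rle) ((a, w) ::ₘ Dom) Γ Δ
  | idN (h : gNew) {Rle Dom : Multiset (ℕ × ℕ)} {Γ Δ : LSeq} (w u P : ℕ)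
      (aus : List (ℕ × ℕ)) :
      (∀ p ∈ aus, CondD cd Rle p.2 w) →
      Cond4 Rle w u →
      IDer cd gOld gStr gNew Rle ((↑aus : Multiset (ℕ × ℕ)) + Dom)
        ((w, IFml.atom P (aus.map fun p => ITerm.param p.1)) ::ₘ Γ)
        ((u, IFml.atom P (aus.map fun p => ITerm.param p.1)) ::ₘ Δ)
  | prImp (h : gNew) {Rle Dom : Multiset (ℕ × ℕ)} {Γ Δ : LSeq} {w u : ℕ}
      {φ ψ : IFml} :
      Cond4 Rle w u →
      IDer cd gOld gStr gNew Rle Dom ((w, IFml.imp φ ψ) ::ₘ Γ) ((u, φ) ::ₘ Δ) →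
      IDer cd gOld gStr gNew Rle Dom ((w, IFml.imp φ ψ) ::ₘ (u, ψ) ::ₘ Γ) Δ →
      IDer cd gOld gStr gNew Rle Dom ((w, IFml.imp φ ψ) ::ₘ Γ) Δ
  | exr1 (h : gNew) {Rle Dom : Multiset (ℕ × ℕ)} {Γ Δ : LSeq} {w u a : ℕ}
      {φ : IFml} :
      CondD cd Rle u w →
      IDer cd gOld gStr gNew Rle ((a, u) ::ₘ Dom) Γ
        ((w, open0 φ a) ::ₘ (w, IFml.ex φ) ::ₘ Δ) →
      IDer cd gOld gStr gNew Rle ((a, u) ::ₘ Dom) Γ ((w, IFml.ex φ) ::ₘ Δ)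
  | exr2 (h : gNew) {Rle Dom : Multiset (ℕ × ℕ)} {Γ Δ : LSeq} {w u a : ℕ}
      {φ : IFml} :
      CondD cd Rle u w →
      ¬ poccurs a Dom Γ ((w, IFml.ex φ) ::ₘ Δ) →
      IDer cd gOld gStr gNew Rle ((a, u) ::ₘ Dom) Γ
        ((w, open0 φ a) ::ₘ (w, IFml.ex φ) ::ₘ Δ) →
      IDer cd gOld gStr gNew Rle Dom Γ ((w, IFml.ex φ) ::ₘ Δ)
  | alll1 (h : gNew) {Rle Dom : Multiset (ℕ × ℕ)} {Γ Δ : LSeq} {w u v a : ℕ}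
      {φ : IFml} :
      CondD cd Rle u v → Cond4 Rle w v →
      IDer cd gOld gStr gNew Rle ((a, u) ::ₘ Dom)
        ((w, IFml.all φ) ::ₘ (v, open0 φ a) ::ₘ Γ) Δ →
      IDer cd gOld gStr gNew Rle ((a, u) ::ₘ Dom) ((w, IFml.all φ) ::ₘ Γ) Δ
  | alll2 (h : gNew) {Rle Dom : Multiset (ℕ × ℕ)} {Γ Δ : LSeq} {w u v a : ℕ}
      {φ : IFml} :
      CondD cd Rle u v → Cond4 Rle w v →
      ¬ poccurs a Dom ((w, IFml.all φ) ::ₘ Γ) Δ →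
      IDer cd gOld gStr gNew Rle ((a, u) ::ₘ Dom)
        ((w, IFml.all φ) ::ₘ (v, open0 φ a) ::ₘ Γ) Δ →
      IDer cd gOld gStr gNew Rle Dom ((w, IFml.all φ) ::ₘ Γ) Δ

/-!
The strings of `L_{S4}(a)` contain only the letter `a`, so the given propagation path is a chain
`w ≤ x₁ ≤ ⋯ ≤ u` of relational atoms of `R`. Walking along it, weaken by `x₁ ≤ u` and use `(tra)`
to remove `w ≤ u`, then trade `x₁ ≤ u` for `x₂ ≤ u`, and so on, until `u ≤ u` is left, which
`(ref)` removes. All labels added by these weakenings already occur in relational atoms, so they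
never clash with an eigenvariable and no renaming is needed.
-/

theorem langB_S4sys_forall_mem_eq {x : Bool} {s : List Bool} (h : LangB S4sys x s) :
    ∀ c ∈ s, c = x := by
  induction h with
  | refl => simp
  | tail _ step ih =>
    obtain ⟨u, v, y, r, rule_mem, rfl, rfl⟩ := step
    have hr : ∀ c ∈ r, c = y := by
      simp only [S4sys, Set.mem_insert_iff, Set.mem_singleton_iff, Prod.mk.injEq] at rule_mem
      rcases rule_mem with ⟨rfl, rfl⟩ | ⟨rfl, rfl⟩ | ⟨rfl, rfl⟩ | ⟨rfl, rfl⟩ <;> simp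
    have hy : y = x := ih y (by simp)
    intro c hc
    rcases List.mem_append.1 hc with hc | hc
    · rcases List.mem_append.1 hc with hc | hc
      · exact ih c (by simp [hc])
      · exact (hr c hc).trans hy
    · exact ih c (by simp [hc])

section PropagationGraph

variable {cd : Bool} {R R' : Multiset (ℕ × ℕ)} {w u : ℕ} {s : List Bool}

theorem BPath.reflTransGen (hp : BPath R w u s) (hs : ∀ c ∈ s, c = true) :
    Relation.ReflTransGen (fun x y => (x, y) ∈ R) w u := by
  induction hp with
  | nil => exact .refl
  | cons edge _ ih =>
    obtain ⟨rfl, hs_tail⟩ := List.forall_mem_cons.1 hs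
    exact .head edge (ih hs_tail)

theorem Cond4.reflTransGen (h : Cond4 R w u) :
    Relation.ReflTransGen (fun x y => (x, y) ∈ R) w u :=
  let ⟨_, hp, hs⟩ := h
  hp.reflTransGen (langB_S4sys_forall_mem_eq hs)

theorem IEdge.mono {c : Bool} (hR : R ⊆ R') (h : IEdge R w u c) : IEdge R' w u c := by
  cases c
  · exact hR h
  · exact hR h

theorem BPath.mono (hR : R ⊆ R') (h : BPath R w u s) : BPath R' w u s := by
  induction h with
  | nil => exact .nil _
  | cons edge _ ih => exact .cons (edge.mono hR) ih

theorem Cond4.mono (hR : R ⊆ R') (h : Cond4 R w u) : Cond4 R' w u :=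
  h.imp fun _ ⟨hp, hs⟩ => ⟨hp.mono hR, hs⟩

theorem Cond5.mono (hR : R ⊆ R') (h : Cond5 R w u) : Cond5 R' w u :=
  h.imp fun _ ⟨hp, hs⟩ => ⟨hp.mono hR, hs⟩

theorem CondD.mono (hR : R ⊆ R') (h : CondD cd R w u) : CondD cd R' w u := by
  cases cd
  · exact Cond4.mono hR h
  · exact Cond5.mono hR h

end PropagationGraph

/-- The set of labels occurring in the relational atoms `R`. Labels that occur only in domain
atoms or labelled formulae are not counted. -/
def relLabels (R : Multiset (ℕ × ℕ)) : Set ℕ :=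
  {v | ∃ w u, (w, u) ∈ R ∧ (v = w ∨ v = u)}

section Labels

variable {R R' S D : Multiset (ℕ × ℕ)} {Γ Δ : LSeq} {v w u : ℕ}

theorem relLabels_mono (h : R ⊆ R') : relLabels R ⊆ relLabels R' :=
  fun _ ⟨w, u, hm, hv⟩ => ⟨w, u, h hm, hv⟩

theorem relLabels_subset_cons (p : ℕ × ℕ) (R : Multiset (ℕ × ℕ)) :
    relLabels R ⊆ relLabels (p ::ₘ R) :=
  relLabels_mono (Multiset.subset_cons R p)

theorem snd_mem_relLabels (h : (w, u) ∈ R) : u ∈ relLabels R :=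
  ⟨w, u, h, .inr rfl⟩

theorem relLabels_singleton_subset (hw : w ∈ relLabels R) (hu : u ∈ relLabels R) :
    relLabels {(w, u)} ⊆ relLabels R := by
  rintro v ⟨x, y, hm, hv⟩
  obtain ⟨rfl, rfl⟩ := Prod.mk.inj (Multiset.mem_singleton.1 hm)
  rcases hv with rfl | rfl
  · exact hw
  · exact hu

theorem loccurs_of_loccurs_add (hS : relLabels S ⊆ relLabels R)
    (h : loccurs v (R + S) D Γ Δ) : loccurs v R D Γ Δ := by
  refine h.imp_left ?_
  rintro ⟨x, y, hm, hv⟩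
  rcases Multiset.mem_add.1 hm with hm | hm
  · exact ⟨x, y, hm, hv⟩
  · exact hS ⟨x, y, hm, hv⟩

end Labels

namespace IDer

variable {cd : Bool} {gOld gStr gNew : Prop} {R S D : Multiset (ℕ × ℕ)} {Γ Δ : LSeq} {w x u : ℕ}

theorem add_rel (h : IDer cd gOld gStr gNew R D Γ Δ) (hS : relLabels S ⊆ relLabels R) :
    IDer cd gOld gStr gNew (R + S) D Γ Δ := by
  have sub (T : Multiset (ℕ × ℕ)) : T ⊆ T + S :=
    Multiset.subset_of_le (Multiset.le_add_right T S)
  induction h with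
  | botl => exact .botl ..
  | andl _ ih => exact .andl (ih hS)
  | andr _ _ ih₁ ih₂ => exact .andr (ih₁ hS) (ih₂ hS)
  | orl _ _ ih₁ ih₂ => exact .orl (ih₁ hS) (ih₂ hS)
  | orr _ ih => exact .orr (ih hS)
  | impr fresh _ ih =>
    have premise := ih (hS.trans (relLabels_subset_cons _ _))
    exact .impr (mt (loccurs_of_loccurs_add hS) fresh) (Multiset.cons_add .. ▸ premise)
  | exl fresh _ ih => exact .exl fresh (ih hS)
  | allr fresh fresh_param _ ih =>
    have premise := ih (hS.trans (relLabels_subset_cons _ _))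
    exact .allr (mt (loccurs_of_loccurs_add hS) fresh) fresh_param
      (Multiset.cons_add .. ▸ premise)
  | id h => exact Multiset.cons_add .. ▸ .id h ..
  | impl h _ _ ih₁ ih₂ =>
    simp only [Multiset.cons_add] at ih₁ ih₂ ⊢
    exact .impl h (ih₁ hS) (ih₂ hS)
  | exr h _ ih => exact .exr h (ih hS)
  | alll h _ ih => exact Multiset.cons_add .. ▸ .alll h (Multiset.cons_add .. ▸ ih hS)
  | ref h _ ih =>
    have premise := ih (hS.trans (relLabels_subset_cons _ _))
    exact .ref h (Multiset.cons_add .. ▸ premise)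
  | tra h _ ih =>
    simp only [Multiset.cons_add] at ih ⊢
    refine .tra h (ih (hS.trans (relLabels_mono ?_)))
    exact Multiset.cons_subset_cons (Multiset.cons_subset_cons (Multiset.subset_cons _ _))
  | nd h _ ih => exact Multiset.cons_add .. ▸ .nd h (Multiset.cons_add .. ▸ ih hS)
  | ned h fresh _ ih => exact .ned h fresh (ih hS)
  | cdr h hcd _ ih => exact Multiset.cons_add .. ▸ .cdr h hcd (Multiset.cons_add .. ▸ ih hS)
  | idN h w u P aus hD hwu =>
    exact .idN h w u P aus (fun p hp => (hD p hp).mono (sub _)) (hwu.mono (sub _))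
  | prImp h hwu _ _ ih₁ ih₂ => exact .prImp h (hwu.mono (sub _)) (ih₁ hS) (ih₂ hS)
  | exr1 h hD _ ih => exact .exr1 h (hD.mono (sub _)) (ih hS)
  | exr2 h hD fresh _ ih => exact .exr2 h (hD.mono (sub _)) fresh (ih hS)
  | alll1 h hD hwv _ ih => exact .alll1 h (hD.mono (sub _)) (hwv.mono (sub _)) (ih hS)
  | alll2 h hD hwv fresh _ ih =>
    exact .alll2 h (hD.mono (sub _)) (hwv.mono (sub _)) fresh (ih hS)

theorem cons_rel (h : IDer cd gOld gStr gNew R D Γ Δ) (hw : w ∈ relLabels R)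
    (hu : u ∈ relLabels R) : IDer cd gOld gStr gNew ((w, u) ::ₘ R) D Γ Δ := by
  rw [← Multiset.singleton_add, add_comm]
  exact h.add_rel (relLabels_singleton_subset hw hu)

theorem replace_rel_of_mem (hStr : gStr) (hwx : (w, x) ∈ R)
    (h : IDer cd gOld gStr gNew ((w, u) ::ₘ R) D Γ Δ) :
    IDer cd gOld gStr gNew ((x, u) ::ₘ R) D Γ Δ := by
  have weakened : IDer cd gOld gStr gNew ((x, u) ::ₘ (w, u) ::ₘ R) D Γ Δ :=
    h.cons_rel (snd_mem_relLabels (Multiset.mem_cons_of_mem hwx))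
      (snd_mem_relLabels (Multiset.mem_cons_self _ _))
  obtain ⟨R, rfl⟩ := Multiset.exists_cons_of_mem hwx
  rw [Multiset.cons_swap (w, u), Multiset.cons_swap (x, u)] at weakened
  rw [Multiset.cons_swap]
  exact .tra hStr weakened

theorem delete_rel_of_reflTransGen (hStr : gStr)
    (hwu : Relation.ReflTransGen (fun x y => (x, y) ∈ R) w u)
    (h : IDer cd gOld gStr gNew ((w, u) ::ₘ R) D Γ Δ) :
    IDer cd gOld gStr gNew R D Γ Δ := by
  induction hwu using Relation.ReflTransGen.head_induction_on with
  | refl => exact .ref hStr h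
  | head hwx _ ih => exact ih (h.replace_rel_of_mem hStr hwx)

end IDer

theorem delete_relational_atom_general {cd : Bool} {gOld gStr gNew : Prop}
    {R D : Multiset (ℕ × ℕ)} {Γ Δ : LSeq} {w u : ℕ} (hStr : gStr)
    (hd : IDer cd gOld gStr gNew ((w, u) ::ₘ R) D Γ Δ) (hp : Cond4 R w u) :
    IDer cd gOld gStr gNew R D Γ Δ :=
  hd.delete_rel_of_reflTransGen hStr hp.reflTransGen

/-- Let `Λ := R, Γ ⊢ Δ`.  If `R, w ≤ u, Γ ⊢ Δ` is derivable
in `G3IntQ` (respectively `G3IntQC`, according to `cd`) and there is a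
(possibly empty) propagation path `π(w,u)` in the propagation graph of `Λ` with
`s_π(w,u) ∈ L_{S4}(a)`, then `R, Γ ⊢ Δ` is derivable in `G3IntQ`
(respectively `G3IntQC`). -/
theorem delete_relational_atom (cd : Bool) (Rle Dom : Multiset (ℕ × ℕ))
    (Γ Δ : LSeq) (w u : ℕ)
    (hd : IDer cd True True False ((w, u) ::ₘ Rle) Dom Γ Δ)
    (hp : Cond4 Rle w u) :
    IDer cd True True False Rle Dom Γ Δ :=
  delete_relational_atom_general trivial hd hp

end IntFOL
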